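/- For the example M = ℝ² \ ({0} × [−1,1]) with X = ∂_x, the Hausdorff quotient of the flow completion M_ℝ (the quotient by the equivalence relation generated by identifying non-separable points) is not a topological manifold. -/

import Mathlib

open Topology Filter

/-- The flow completion of `(ℝ² \ ({0} × [-1,1]), ∂ₓ)`: the plane with the strip
`ℝ × [-1, 1]` doubled, i.e. two copies of `ℝ²` glued by the identity over
`{|y| > 1}`. -/
def DoubledStripRel : ((ℝ × ℝ) ⊕ (ℝ × ℝ)) → ((ℝ × ℝ) ⊕ (ℝ × ℝ)) → Prop :=
  fun a b => ∃ p : ℝ × ℝ, 1 < |p.2| ∧ a = Sum.inl p ∧ b = Sum.inr p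

/-- The plane with the strip `ℝ × [-1, 1]` doubled. -/
def DoubledStripPlane : Type := Quot DoubledStripRel

instance : TopologicalSpace DoubledStripPlane :=
  instTopologicalSpaceQuot

/-- The Hausdorff quotient of the flow completion: the quotient by the equivalence
relation generated by identifying non-separable points. -/
def StripHausdorffQuotient : Type :=
  Quot (fun a b : DoubledStripPlane => ¬ Disjoint (𝓝 a) (𝓝 b))

instance : TopologicalSpace StripHausdorffQuotient :=
  instTopologicalSpaceQuot

namespace StripAux

open Complex Set

lemma exp_one_const {X : Type*} [TopologicalSpace X] {S : Set X} (hS : IsPreconnected S)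
    {u : X → ℂ} (hu : ContinuousOn u S) (h1 : ∀ x ∈ S, exp (u x) = 1) :
    ∃ k : ℤ, ∀ x ∈ S, u x = k * (2 * Real.pi * I) := by
  rcases S.eq_empty_or_nonempty with rfl | ⟨x0, hx0⟩
  · exact ⟨0, by simp⟩
  obtain ⟨k, hk⟩ := Complex.exp_eq_one_iff.1 (h1 x0 hx0)
  refine ⟨k, fun x hx => ?_⟩
  rw [← hk]
  have hpi : (2 * Real.pi * I : ℂ) ≠ 0 := by simp [Real.pi_ne_zero, I_ne_zero]
  have hc : ContinuousOn (fun x => (u x / (2 * Real.pi * I)).re) S :=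
    Complex.continuous_re.comp_continuousOn (hu.div_const _)
  have hd : IsDiscrete (range ((↑) : ℤ → ℝ)) := by
    refine ⟨?_⟩
    exact Int.isClosedEmbedding_coe_real.isEmbedding.toHomeomorph.symm.isEmbedding.discreteTopology
  have hm : MapsTo (fun x => (u x / (2 * Real.pi * I)).re) S (range ((↑) : ℤ → ℝ)) := by
    intro x hx
    obtain ⟨k, hk⟩ := Complex.exp_eq_one_iff.1 (h1 x hx)
    refine ⟨k, ?_⟩
    simp only [hk, mul_div_cancel_right₀ _ hpi, intCast_re]
  have := hS.constant_of_mapsTo hd hc hm hx hx0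
  obtain ⟨l, hl⟩ := Complex.exp_eq_one_iff.1 (h1 x hx)
  simp only [hk, hl, mul_div_cancel_right₀ _ hpi, intCast_re] at this ⊢
  have : l = k := by exact_mod_cast this
  rw [this]

lemma exists_log {E : Type*} [NormedAddCommGroup E] [NormedSpace ℝ E] {S : Set E} {x : E}
    (hS : StarConvex ℝ x S) (hx : x ∈ S) (hO : IsOpen S) {f : E → ℂ} (hf : ContinuousOn f S)
    (h0 : ∀ p ∈ S, f p ≠ 0) : ∃ g : E → ℂ, ContinuousOn g S ∧ ∀ p ∈ S, exp (g p) = f p := by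
  have := hS.contractibleSpace ⟨x, hx⟩
  have hs : IsSimplyConnected S := (inferInstance : SimplyConnectedSpace S)
  obtain ⟨g, hg, he⟩ := Complex.exists_continuousOn_eqOn_exp_comp hs hO hf
    (by rintro ⟨p, hp, h⟩; exact h0 p hp h)
  exact ⟨g, hg, fun p hp => he hp⟩

lemma star_side {F : Type*} [NormedAddCommGroup F] [NormedSpace ℝ F] (s : ℝ) (hs : s ≠ 0) :
    StarConvex ℝ ((s, 0) : ℝ × F) {p : ℝ × F | 0 < s * p.1 ∨ p.2 ≠ 0} := by
  intro p hp a b ha hb hab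
  have hss : 0 < s * s := mul_self_pos.2 hs
  rcases eq_or_lt_of_le hb with rfl | hb'
  · left
    have : a = 1 := by linarith
    simp [this, hss]
  by_cases h2 : p.2 = 0
  · left
    have h1 : 0 < s * p.1 := by
      rcases hp with h | h
      · exact h
      · exact absurd h2 h
    simp only [Prod.fst_add, Prod.smul_fst, smul_eq_mul]
    have := mul_pos hb' h1
    have := mul_nonneg ha hss.le
    nlinarith
  · right
    simp [hb'.ne', h2]

lemma open_side {F : Type*} [NormedAddCommGroup F] [NormedSpace ℝ F] (s : ℝ) :
    IsOpen {p : ℝ × F | 0 < s * p.1 ∨ p.2 ≠ 0} :=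
  IsOpen.union (s₁ := {p : ℝ × F | 0 < s * p.1}) (s₂ := {p : ℝ × F | p.2 ≠ 0})
    (isOpen_lt continuous_const (by fun_prop)) (isOpen_ne_fun continuous_snd continuous_const)

lemma two_sides {F : Type*} [NormedAddCommGroup F] [NormedSpace ℝ F] {C₁ C₂ : Set F}
    (hC₁ : IsPreconnected C₁) (hC₂ : IsPreconnected C₂) (hC : C₁ ∪ C₂ = {0}ᶜ)
    {f : ℝ × F → ℂ} (hf : ContinuousOn f {0}ᶜ) (h0 : ∀ p ≠ 0, f p ≠ 0) :
    ∃ (α β : ℝ × F → ℂ) (k l : ℤ), 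
      ContinuousOn α {p : ℝ × F | 0 < (1:ℝ) * p.1 ∨ p.2 ≠ 0} ∧
      ContinuousOn β {p : ℝ × F | 0 < (-1:ℝ) * p.1 ∨ p.2 ≠ 0} ∧
      (∀ p : ℝ × F, (0 < (1:ℝ) * p.1 ∨ p.2 ≠ 0) → exp (α p) = f p) ∧
      (∀ p : ℝ × F, (0 < (-1:ℝ) * p.1 ∨ p.2 ≠ 0) → exp (β p) = f p) ∧
      (∀ p : ℝ × F, p.2 ∈ C₁ → α p - β p = k * (2 * Real.pi * I)) ∧
      (∀ p : ℝ × F, p.2 ∈ C₂ → α p - β p = l * (2 * Real.pi * I)) := by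
  have hsub : ∀ s : ℝ, {p : ℝ × F | 0 < s * p.1 ∨ p.2 ≠ 0} ⊆ {0}ᶜ := by
    rintro s p hp rfl
    simp at hp
  obtain ⟨α, hα, hα'⟩ := exists_log (star_side (F := F) 1 one_ne_zero) (by simp) (open_side 1)
    (hf.mono (hsub 1)) (fun p hp => h0 p (hsub 1 hp))
  obtain ⟨β, hβ, hβ'⟩ := exists_log (star_side (F := F) (-1) (by norm_num)) (by simp)
    (open_side (-1)) (hf.mono (hsub (-1))) (fun p hp => h0 p (hsub (-1) hp))
  have key : ∀ C : Set F, IsPreconnected C → C ⊆ {0}ᶜ → ∃ k : ℤ,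
      ∀ p : ℝ × F, p.2 ∈ C → α p - β p = k * (2 * Real.pi * I) := by
    intro C hCp hCs
    have hpre : IsPreconnected ((univ : Set ℝ) ×ˢ C) := isPreconnected_univ.prod hCp
    obtain ⟨k, hk⟩ := exp_one_const (u := fun p => α p - β p) hpre
      ((hα.mono fun p hp => Or.inr (hCs hp.2)).sub (hβ.mono fun p hp => Or.inr (hCs hp.2)))
      (by
        intro p hp
        have hp' : p.2 ≠ 0 := hCs hp.2
        rw [Complex.exp_sub, hα' p (Or.inr hp'), hβ' p (Or.inr hp')]
        exact div_self (h0 p fun h => hp' (by simp [h])))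
    exact ⟨k, fun p hp => hk p ⟨mem_univ _, hp⟩⟩
  obtain ⟨k, hk⟩ := key C₁ hC₁ (hC ▸ subset_union_left)
  obtain ⟨l, hl⟩ := key C₂ hC₂ (hC ▸ subset_union_right)
  exact ⟨α, β, k, l, hα, hβ, hα', hβ', hk, hl⟩

lemma rank_le_one {F : Type*} [NormedAddCommGroup F] [NormedSpace ℝ F] {C₁ C₂ : Set F}
    (hC₁ : IsPreconnected C₁) (hC₂ : IsPreconnected C₂) (hC : C₁ ∪ C₂ = {0}ᶜ)
    {f₁ f₂ : ℝ × F → ℂ} (hf₁ : ContinuousOn f₁ {0}ᶜ) (h₁ : ∀ p ≠ 0, f₁ p ≠ 0)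
    (hf₂ : ContinuousOn f₂ {0}ᶜ) (h₂ : ∀ p ≠ 0, f₂ p ≠ 0) :
    ∃ (a b : ℤ) (g : ℝ × F → ℂ), (a ≠ 0 ∨ b ≠ 0) ∧ ContinuousOn g {0}ᶜ ∧
      ∀ p ≠ 0, f₁ p ^ a * f₂ p ^ b = exp (g p) := by
  classical
  obtain ⟨α₁, β₁, k₁, l₁, hα₁, hβ₁, eα₁, eβ₁, hk₁, hl₁⟩ := two_sides hC₁ hC₂ hC hf₁ h₁
  obtain ⟨α₂, β₂, k₂, l₂, hα₂, hβ₂, eα₂, eβ₂, hk₂, hl₂⟩ := two_sides hC₁ hC₂ hC hf₂ h₂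
  obtain ⟨a, b, hab, hrel⟩ : ∃ a b : ℤ, (a ≠ 0 ∨ b ≠ 0) ∧
      a * k₁ + b * k₂ = a * l₁ + b * l₂ := by
    by_cases h : k₁ = l₁
    · exact ⟨1, 0, Or.inl one_ne_zero, by simp [h]⟩
    · exact ⟨k₂ - l₂, l₁ - k₁, Or.inr (by omega), by ring⟩
  set A : Set (ℝ × F) := {p : ℝ × F | 0 < (1:ℝ) * p.1 ∨ p.2 ≠ 0} with hA
  set B : Set (ℝ × F) := {p : ℝ × F | 0 < (-1:ℝ) * p.1 ∨ p.2 ≠ 0} with hB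
  let gA : ℝ × F → ℂ := fun p => a * α₁ p + b * α₂ p
  let gB : ℝ × F → ℂ := fun p => a * β₁ p + b * β₂ p + (a * k₁ + b * k₂ : ℤ) * (2 * Real.pi * I)
  let g : ℝ × F → ℂ := fun p => if p ∈ A then gA p else gB p
  have hgA : ∀ p ∈ A, g p = gA p := fun p hp => if_pos hp
  have hgB : ∀ p ∈ B, g p = gB p := by
    intro p hp
    by_cases hpA : p ∈ A
    · rw [hgA p hpA]
      have hp2 : p.2 ≠ 0 := by
        intro h
        rcases hp with hp | hp
        · rcases hpA with hpA | hpA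
          · linarith
          · exact hpA h
        · exact hp h
      have : p.2 ∈ C₁ ∪ C₂ := hC ▸ hp2
      rcases this with h | h
      · have e1 := hk₁ p h
        have e2 := hk₂ p h
        simp only [gA, gB]
        push_cast
        linear_combination (a : ℂ) * e1 + b * e2
      · have e1 := hl₁ p h
        have e2 := hl₂ p h
        simp only [gA, gB]
        rw [hrel]
        push_cast
        linear_combination (a : ℂ) * e1 + b * e2
    · exact if_neg hpA
  have hcover : ({0}ᶜ : Set (ℝ × F)) ⊆ A ∪ B := by
    intro p hp
    by_cases h2 : p.2 = 0
    · have h1 : p.1 ≠ 0 := fun h => hp (Prod.ext h h2)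
      rcases lt_or_gt_of_ne h1 with h | h
      · right; left; linarith
      · left; left; linarith
    · left; right; exact h2
  have cA : ContinuousOn g A :=
    ContinuousOn.congr (by fun_prop) hgA
  have cB : ContinuousOn g B :=
    ContinuousOn.congr (by fun_prop) hgB
  refine ⟨a, b, g, hab, ?_, ?_⟩
  · exact (cA.union_of_isOpen cB (open_side 1) (open_side (-1))).mono hcover
  · intro p hp
    rcases hcover hp with h | h
    · rw [hgA p h, ← eα₁ p h, ← eα₂ p h, ← Complex.exp_int_mul, ← Complex.exp_int_mul,
        ← Complex.exp_add]
    · rw [hgB p h, ← eβ₁ p h, ← eβ₂ p h, ← Complex.exp_int_mul, ← Complex.exp_int_mul,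
        ← Complex.exp_add, Complex.exp_add (_ + _) (_ * (2 * Real.pi * I)),
        Complex.exp_int_mul_two_pi_mul_I, mul_one]

lemma compl_zero_two (m : ℕ) : ∃ C₁ C₂ : Set (Fin m → ℝ), IsPreconnected C₁ ∧ IsPreconnected C₂ ∧
    C₁ ∪ C₂ = {0}ᶜ := by
  rcases Nat.lt_trichotomy m 1 with h | rfl | h
  · obtain rfl : m = 0 := by omega
    exact ⟨∅, ∅, isPreconnected_empty, isPreconnected_empty, by
      ext x; simp [Subsingleton.elim x 0]⟩
  · refine ⟨{v | 0 < v 0}, {v | v 0 < 0}, ?_, ?_, ?_⟩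
    · exact (convex_halfSpace_gt (f := fun v : Fin 1 → ℝ => v 0)
        ⟨fun _ _ => rfl, fun _ _ => rfl⟩ 0).isPreconnected
    · exact (convex_halfSpace_lt (f := fun v : Fin 1 → ℝ => v 0)
        ⟨fun _ _ => rfl, fun _ _ => rfl⟩ 0).isPreconnected
    · ext v
      simp only [mem_union, mem_ofPred_eq, mem_compl_iff, mem_singleton_iff]
      rw [show v = 0 ↔ v 0 = 0 from ⟨fun h => by simp [h], fun h => by
        ext i; rw [Subsingleton.elim i 0]; simpa using h⟩]
      rw [or_comm]; exact lt_or_lt_iff_ne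
  · have : IsPreconnected ({0}ᶜ : Set (Fin m → ℝ)) :=
      (isConnected_compl_singleton_of_one_lt_rank (by simpa using h) 0).isPreconnected
    exact ⟨_, _, this, this, union_self _⟩

lemma rank_le_one_pi (n : ℕ) {f₁ f₂ : (Fin n → ℝ) → ℂ}
    (hf₁ : ContinuousOn f₁ {0}ᶜ) (h₁ : ∀ p ≠ 0, f₁ p ≠ 0)
    (hf₂ : ContinuousOn f₂ {0}ᶜ) (h₂ : ∀ p ≠ 0, f₂ p ≠ 0) :
    ∃ (a b : ℤ) (g : (Fin n → ℝ) → ℂ), (a ≠ 0 ∨ b ≠ 0) ∧ ContinuousOn g {0}ᶜ ∧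
      ∀ p ≠ 0, f₁ p ^ a * f₂ p ^ b = exp (g p) := by
  cases n with
  | zero =>
    refine ⟨1, 0, fun _ => 0, Or.inl one_ne_zero, continuousOn_const, fun p hp => ?_⟩
    exact absurd (Subsingleton.elim p 0) hp
  | succ m =>
    obtain ⟨C₁, C₂, hC₁, hC₂, hC⟩ := compl_zero_two m
    let e : (ℝ × (Fin m → ℝ)) ≃L[ℝ] (Fin (m + 1) → ℝ) := Fin.consEquivL ℝ (fun _ => ℝ)
    have he : MapsTo e {0}ᶜ {0}ᶜ := fun p hp => by simpa using hp
    have he' : MapsTo e.symm {0}ᶜ {0}ᶜ := fun p hp => by simpa using hp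
    obtain ⟨a, b, g, hab, hg, hfg⟩ := rank_le_one hC₁ hC₂ hC
      (f₁ := f₁ ∘ e) (f₂ := f₂ ∘ e)
      (hf₁.comp e.continuous.continuousOn he) (fun p hp => h₁ _ (he hp))
      (hf₂.comp e.continuous.continuousOn he) (fun p hp => h₂ _ (he hp))
    refine ⟨a, b, g ∘ e.symm, hab, hg.comp e.symm.continuous.continuousOn he', fun p hp => ?_⟩
    have := hfg (e.symm p) (he' hp)
    simpa using this

lemma chart_local {Q : Type*} [TopologicalSpace Q] {z : Q} {n : ℕ} {U : Set Q}
    {V : Set (Fin n → ℝ)} (hz : z ∈ U) (hU : IsOpen U) (hV : IsOpen V) (h : U ≃ₜ V)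
    {O : Set Q} (hO : IsOpen O) (hzO : z ∈ O) :
    ∃ (ψ : (Fin n → ℝ) → Q) (φ : Q → (Fin n → ℝ)) (N : Set Q), Continuous ψ ∧ IsOpen N ∧ z ∈ N ∧
      ContinuousOn φ N ∧ (∀ q ∈ N, ψ (φ q) = q) ∧ (∀ x, ψ x = z → x = 0) ∧ ψ 0 = z ∧
      ∀ x, ψ x ∈ O := by
  classical
  let V' : Set (Fin n → ℝ) := Subtype.val '' {v : V | (h.symm v : Q) ∈ O}
  have hV' : IsOpen V' := hV.isOpenMap_subtype_val _
    (hO.preimage (continuous_subtype_val.comp h.symm.continuous))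
  let v0 : V := h ⟨z, hz⟩
  have hv0 : (v0 : Fin n → ℝ) ∈ V' := ⟨v0, by simp [v0, hzO], rfl⟩
  obtain ⟨r, hr, hball⟩ := Metric.isOpen_iff.1 hV' _ hv0
  let e := OpenPartialHomeomorph.univBall (v0 : Fin n → ℝ) r
  have hes : e.source = univ := OpenPartialHomeomorph.univBall_source _ _
  have het : e.target = Metric.ball (v0 : Fin n → ℝ) r := OpenPartialHomeomorph.univBall_target _ hr
  have he0 : e 0 = v0 := OpenPartialHomeomorph.univBall_apply_zero _ _
  have hec : Continuous e := by
    rw [← continuousOn_univ, ← hes]; exact e.continuousOn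
  have heV' : ∀ x, e x ∈ V' := fun x => hball (het ▸ e.map_source (hes ▸ mem_univ x))
  have heV : ∀ x, e x ∈ V := fun x => by
    obtain ⟨v, -, hv⟩ := heV' x
    rw [← hv]; exact v.2
  let N0 : Set U := {u : U | (h u : Fin n → ℝ) ∈ Metric.ball (v0 : Fin n → ℝ) r}
  have hN0 : IsOpen N0 := Metric.isOpen_ball.preimage (continuous_subtype_val.comp h.continuous)
  let φ : Q → (Fin n → ℝ) := fun q => if hq : q ∈ U then e.symm (h ⟨q, hq⟩) else 0
  refine ⟨fun x => h.symm ⟨e x, heV x⟩, φ, Subtype.val '' N0, ?_, hU.isOpenMap_subtype_val _ hN0,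
    ⟨⟨z, hz⟩, Metric.mem_ball_self hr, rfl⟩, ?_, ?_, ?_, ?_, ?_⟩
  · exact continuous_subtype_val.comp (h.symm.continuous.comp (hec.subtype_mk _))
  · rw [Topology.IsInducing.subtypeVal.continuousOn_image_iff]
    have hc : ContinuousOn (fun u : U => e.symm (h u)) N0 :=
      e.continuousOn_symm.comp (continuous_subtype_val.comp h.continuous).continuousOn
        (fun u hu => het ▸ hu)
    exact hc.congr fun u _ => by simp [φ]
  · rintro _ ⟨u, hu, rfl⟩
    have h1 : φ u = e.symm (h u) := by simp [φ]
    have h2 : e (e.symm (h u)) = h u := e.right_inv (het ▸ hu)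
    simp [h1, h2]
  · intro x hx
    have : (⟨e x, heV x⟩ : V) = v0 := by
      rw [← h.apply_symm_apply ⟨e x, heV x⟩]
      exact congrArg h (Subtype.ext hx)
    have h2 : e x = e 0 := by rw [he0, ← this]
    exact e.injOn (hes ▸ mem_univ x) (hes ▸ mem_univ 0) h2
  · simp [he0, v0]
  · intro x
    obtain ⟨v, hv, hvx⟩ := heV' x
    have : (⟨e x, heV x⟩ : V) = v := Subtype.ext hvx.symm
    simpa [this] using hv

lemma winding {p s g : ℝ → ℂ} (hp : Continuous p) (hs : Continuous s) (hg : Continuous g)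
    (hp1 : p 1 = p 0 + 2 * Real.pi * I) (hs1 : s 1 = s 0) (hg1 : g 1 = g 0) {a b : ℤ}
    (h : ∀ t, exp (p t) ^ a * exp (s t) ^ b = exp (g t)) : a = 0 := by
  obtain ⟨k, hk⟩ := exp_one_const (S := (univ : Set ℝ)) (u := fun t => a * p t + b * s t - g t)
    isPreconnected_univ (by fun_prop) (by
      intro t _
      rw [Complex.exp_sub, Complex.exp_add, Complex.exp_int_mul, Complex.exp_int_mul, h,
        div_self (Complex.exp_ne_zero _)])
  have e0 := hk 0 (mem_univ _)
  have e1 := hk 1 (mem_univ _)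
  simp only [hp1, hs1, hg1] at e0 e1
  have : (a : ℂ) * (2 * Real.pi * I) = 0 := by linear_combination e1 - e0
  have hpi : (2 * Real.pi * I : ℂ) ≠ 0 := by simp [Real.pi_ne_zero, I_ne_zero]
  simpa [hpi] using this

/-- The circle of radius `ε` about `(0,1)`. -/
noncomputable def circ (ε : ℝ) (t : ℝ) : ℝ × ℝ :=
  (ε * Real.cos (2 * Real.pi * t), 1 + ε * Real.sin (2 * Real.pi * t))

lemma circ_cont (ε : ℝ) : Continuous (circ ε) := by unfold circ; fun_prop

lemma circ_one (ε : ℝ) : circ ε 1 = circ ε 0 := by simp [circ]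

/-- The crossing function. -/
noncomputable def fX (p : ℝ × ℝ) : ℂ := ⟨p.1, |p.2| - 1⟩

/-- The folding function. -/
noncomputable def fY (p : ℝ × ℝ) : ℂ := ⟨p.1, |(|p.2| - 1)|⟩

lemma fX_cont : Continuous fX :=
  Complex.equivRealProdCLM.symm.continuous.comp
    (f := fun p : ℝ × ℝ => (p.1, |p.2| - 1)) (by fun_prop)

lemma fY_cont : Continuous fY :=
  Complex.equivRealProdCLM.symm.continuous.comp
    (f := fun p : ℝ × ℝ => (p.1, |(|p.2| - 1)|)) (by fun_prop)

lemma f_agree {p : ℝ × ℝ} (hp : 1 < |p.2|) : fX p = fY p := by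
  simp only [fX, fY]; rw [abs_of_pos (a := |p.2| - 1) (by linarith)]

lemma fX_zero {p : ℝ × ℝ} (hp : 0 < p.2) (h : fX p = 0) : p = (0, 1) := by
  simp only [fX, Complex.ext_iff, zero_re, zero_im, abs_of_pos hp] at h
  exact Prod.ext h.1 (by simpa using by linarith [h.2])

lemma fY_zero {p : ℝ × ℝ} (hp : 0 < p.2) (h : fY p = 0) : p = (0, 1) := by
  simp only [fY, Complex.ext_iff, zero_re, zero_im, abs_of_pos hp, abs_eq_zero] at h
  exact Prod.ext h.1 (by simpa using by linarith [h.2])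

lemma circ_logs {ε : ℝ} (h0 : 0 < ε) (h1 : ε < 1) : ∃ p s : ℝ → ℂ, Continuous p ∧ Continuous s ∧
    p 1 = p 0 + 2 * Real.pi * I ∧ s 1 = s 0 ∧
    (∀ t, fX (circ ε t) = exp (p t)) ∧ (∀ t, fY (circ ε t) = exp (s t)) := by
  have hpos : ∀ t, 0 < 1 + ε * Real.sin (2 * Real.pi * t) := fun t => by
    nlinarith [Real.neg_one_le_sin (2 * Real.pi * t)]
  have hslit : ∀ t, fY (circ ε t) * (-I) ∈ slitPlane := by
    intro t
    rw [Complex.mem_slitPlane_iff]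
    have hsc := Real.sin_sq_add_cos_sq (2 * Real.pi * t)
    simp only [fY, circ, abs_of_pos (hpos t), add_sub_cancel_left, mul_re, mul_im, neg_re, neg_im,
      I_re, I_im]
    by_cases hs : Real.sin (2 * Real.pi * t) = 0
    · right
      have : Real.cos (2 * Real.pi * t) ≠ 0 := by
        intro h; rw [hs, h] at hsc; norm_num at hsc
      simp [this, h0.ne']
    · left
      have : 0 < |ε * Real.sin (2 * Real.pi * t)| := abs_pos.2 (mul_ne_zero h0.ne' hs)
      simpa using this
  refine ⟨fun t => Real.log ε + 2 * Real.pi * t * I, fun t => log (fY (circ ε t) * (-I)) + log I,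
    by fun_prop, ?_, by simp, by simp only [circ_one], ?_, ?_⟩
  · exact (((fY_cont.comp (circ_cont ε)).mul continuous_const).clog hslit).add continuous_const
  · intro t
    rw [Complex.exp_add, ← Complex.ofReal_exp, Real.exp_log h0]
    have : (2 * Real.pi * t : ℂ) = ((2 * Real.pi * t : ℝ) : ℂ) := by push_cast; ring
    rw [this, Complex.exp_mul_I, ← ofReal_cos, ← ofReal_sin]
    apply Complex.ext <;>
      simp only [fX, circ, abs_of_pos (hpos t), mul_re, mul_im, add_re, add_im, ofReal_re,
        ofReal_im, I_re, I_im] <;> ring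
  · intro t
    rw [Complex.exp_add, Complex.exp_log (slitPlane_ne_zero (hslit t)), Complex.exp_log I_ne_zero,
      mul_assoc]
    simp

/-- Class of a point in the Hausdorff quotient. -/
def cls (a : (ℝ × ℝ) ⊕ (ℝ × ℝ)) : StripHausdorffQuotient :=
  Quot.mk _ (Quot.mk DoubledStripRel a : DoubledStripPlane)

lemma cls_cont : Continuous cls := continuous_quot_mk.comp continuous_quot_mk

lemma cls_eq : cls (Sum.inl (0, 1)) = cls (Sum.inr (0, 1)) := by
  apply Quot.sound
  have hq : Continuous (fun a => (Quot.mk DoubledStripRel a : DoubledStripPlane)) :=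
    continuous_quot_mk
  have hl := (hq.comp continuous_inl).tendsto ((0, 1) : ℝ × ℝ)
  have hr := (hq.comp continuous_inr).tendsto ((0, 1) : ℝ × ℝ)
  let u : ℝ → ℝ × ℝ := fun t => (0, t)
  have hu : Tendsto u (𝓝[>] 1) (𝓝 (0, 1)) :=
    ((show Continuous u by fun_prop).tendsto 1).mono_left nhdsWithin_le_nhds
  have hl' := hl.comp hu
  have hr' := hr.comp hu
  have heq : (((fun a => (Quot.mk DoubledStripRel a : DoubledStripPlane)) ∘ Sum.inl) ∘ u)
      =ᶠ[𝓝[>] 1] (((fun a => (Quot.mk DoubledStripRel a : DoubledStripPlane)) ∘ Sum.inr) ∘ u) := by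
    filter_upwards [self_mem_nhdsWithin] with t ht
    exact Quot.sound ⟨u t, lt_of_lt_of_le ht (le_abs_self t), rfl, rfl⟩
  intro hd
  exact (hl'.congr' heq).not_tendsto hd hr'

lemma descend {Y : Type*} [TopologicalSpace Y] [T2Space Y] {f g : ℝ × ℝ → Y} (hf : Continuous f)
    (hg : Continuous g) (hfg : ∀ p : ℝ × ℝ, 1 < |p.2| → f p = g p) :
    ∃ G : StripHausdorffQuotient → Y, Continuous G ∧ (∀ p, G (cls (Sum.inl p)) = f p) ∧
      ∀ p, G (cls (Sum.inr p)) = g p := by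
  let G0 : DoubledStripPlane → Y := Quot.lift (Sum.elim f g) (by
    rintro _ _ ⟨p, hp, rfl, rfl⟩
    exact hfg p hp)
  have hG0 : Continuous G0 := continuous_quot_lift _ (hf.sumElim hg)
  have hG : ∀ a b : DoubledStripPlane, ¬ Disjoint (𝓝 a) (𝓝 b) → G0 a = G0 b := by
    intro a b hab
    by_contra hne
    exact hab (((hG0.tendsto a).disjoint (disjoint_nhds_nhds.2 hne) (hG0.tendsto b)))
  exact ⟨Quot.lift G0 hG, continuous_quot_lift hG hG0, fun _ => rfl, fun _ => rfl⟩

lemma cls_surj (q : StripHausdorffQuotient) :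
    (∃ p, q = cls (Sum.inl p)) ∨ ∃ p, q = cls (Sum.inr p) := by
  obtain ⟨a, rfl⟩ := Quot.exists_rep q
  obtain ⟨b, rfl⟩ := Quot.exists_rep a
  rcases b with p | p
  · exact Or.inl ⟨p, rfl⟩
  · exact Or.inr ⟨p, rfl⟩

end StripAux

/-- For `M = ℝ² \ ({0} × [-1,1])` with `X = ∂ₓ`, the Hausdorff quotient of the flow
completion `M_ℝ` is not a topological manifold: some point has no open neighbourhood
homeomorphic to an open subset of any `ℝⁿ`. -/
theorem stripHausdorffQuotient_not_manifold :
    ∃ z : StripHausdorffQuotient,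
      ¬ ∃ (n : ℕ) (U : Set StripHausdorffQuotient) (V : Set (Fin n → ℝ)),
        z ∈ U ∧ IsOpen U ∧ IsOpen V ∧ Nonempty (U ≃ₜ V) := by
  refine ⟨StripAux.cls (Sum.inl (0, 1)), ?_⟩
  rintro ⟨n, U, V, hz, hU, hV, ⟨h⟩⟩
  obtain ⟨F₁, hF₁, hF₁l, hF₁r⟩ := StripAux.descend StripAux.fX_cont StripAux.fY_cont
    (fun p hp => StripAux.f_agree hp)
  obtain ⟨F₂, hF₂, hF₂l, hF₂r⟩ := StripAux.descend StripAux.fY_cont StripAux.fX_cont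
    (fun p hp => (StripAux.f_agree hp).symm)
  obtain ⟨Y, hY, hYl, hYr⟩ := StripAux.descend (continuous_snd (X := ℝ) (Y := ℝ)) continuous_snd
    (fun p hp => rfl)
  obtain ⟨ψ, φ, N, hψ, hN, hzN, hφ, hψφ, hψz, hψ0, hψO⟩ := StripAux.chart_local hz hU hV h
    (O := {q | 0 < Y q}) (isOpen_lt continuous_const hY) (by simp [hYl])
  have hne : ∀ q, 0 < Y q → q ≠ StripAux.cls (Sum.inl (0, 1)) → F₁ q ≠ 0 ∧ F₂ q ≠ 0 := by
    intro q hq hqz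
    rcases StripAux.cls_surj q with ⟨p, rfl⟩ | ⟨p, rfl⟩
    · rw [hYl] at hq
      rw [hF₁l, hF₂l]
      exact ⟨fun h => hqz (by rw [StripAux.fX_zero hq h]),
        fun h => hqz (by rw [StripAux.fY_zero hq h])⟩
    · rw [hYr] at hq
      rw [hF₁r, hF₂r]
      exact ⟨fun h => hqz (by rw [StripAux.fY_zero hq h, StripAux.cls_eq]),
        fun h => hqz (by rw [StripAux.fX_zero hq h, StripAux.cls_eq])⟩
  have hψne : ∀ x ≠ 0, F₁ (ψ x) ≠ 0 ∧ F₂ (ψ x) ≠ 0 := fun x hx =>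
    hne _ (hψO x) fun h => hx (hψz x h)
  obtain ⟨a, b, g, hab, hg, hfg⟩ := StripAux.rank_le_one_pi n
    (f₁ := F₁ ∘ ψ) (f₂ := F₂ ∘ ψ) (hF₁.comp hψ).continuousOn (fun x hx => (hψne x hx).1)
    (hF₂.comp hψ).continuousOn (fun x hx => (hψne x hx).2)
  have hF₁z : F₁ (StripAux.cls (Sum.inl (0, 1))) = 0 := by
    rw [hF₁l]; apply Complex.ext <;> simp [StripAux.fX]
  have hF₂z : F₂ (StripAux.cls (Sum.inl (0, 1))) = 0 := by
    rw [hF₂l]; apply Complex.ext <;> simp [StripAux.fY]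
  -- transport of loops to the chart
  have loop : ∀ γ : ℝ → StripHausdorffQuotient, Continuous γ → γ 1 = γ 0 → (∀ t, γ t ∈ N) →
      (∀ t, F₁ (γ t) ≠ 0) → ∃ k : ℝ → ℂ, Continuous k ∧ k 1 = k 0 ∧
        ∀ t, F₁ (γ t) ^ a * F₂ (γ t) ^ b = Complex.exp (k t) := by
    intro γ hγ h10 hγN hγ0
    have hφ0 : ∀ t, φ (γ t) ≠ 0 := by
      intro t ht
      have := hψφ _ (hγN t)
      rw [ht, hψ0] at this
      exact hγ0 t (by rw [← this, hF₁z])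
    refine ⟨fun t => g (φ (γ t)), ?_, by simp only [h10], fun t => ?_⟩
    · exact hg.comp_continuous (hφ.comp_continuous hγ hγN) hφ0
    · have := hfg _ (hφ0 t)
      simpa [hψφ _ (hγN t)] using this
  -- a small circle
  have hLN : (StripAux.cls ∘ Sum.inl) ⁻¹' N ∈ 𝓝 ((0, 1) : ℝ × ℝ) :=
    (hN.preimage (StripAux.cls_cont.comp continuous_inl)).mem_nhds hzN
  have hRN : (StripAux.cls ∘ Sum.inr) ⁻¹' N ∈ 𝓝 ((0, 1) : ℝ × ℝ) :=
    (hN.preimage (StripAux.cls_cont.comp continuous_inr)).mem_nhds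
      (by simpa [StripAux.cls_eq] using hzN)
  obtain ⟨r, hr, hrN⟩ := Metric.mem_nhds_iff.1 (inter_mem hLN hRN)
  obtain ⟨ε, hε0, hε⟩ := exists_between (lt_min hr one_pos)
  have hεr : ε < r := hε.trans_le (min_le_left _ _)
  have hε1 : ε < 1 := hε.trans_le (min_le_right _ _)
  have hcN : ∀ t, StripAux.circ ε t ∈ Metric.ball ((0, 1) : ℝ × ℝ) r := by
    intro t
    rw [Metric.mem_ball, Prod.dist_eq, max_lt_iff]
    simp only [StripAux.circ, Real.dist_eq, sub_zero, add_sub_cancel_left, abs_mul,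
      abs_of_pos hε0]
    constructor
    · nlinarith [Real.abs_cos_le_one (2 * Real.pi * t)]
    · nlinarith [Real.abs_sin_le_one (2 * Real.pi * t)]
  obtain ⟨p, s, hp, hs, hp1, hs1, hpe, hse⟩ := StripAux.circ_logs hε0 hε1
  have ha : a = 0 := by
    obtain ⟨k, hk, hk1, hke⟩ := loop (fun t => StripAux.cls (Sum.inl (StripAux.circ ε t)))
      (StripAux.cls_cont.comp (continuous_inl.comp (StripAux.circ_cont ε)))
      (by simp only [StripAux.circ_one]) (fun t => (hrN (hcN t)).1)
      (fun t => by rw [hF₁l, hpe]; exact Complex.exp_ne_zero _)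
    refine StripAux.winding hp hs hk hp1 hs1 hk1 (a := a) (b := b) fun t => ?_
    rw [← hke, hF₁l, hF₂l, hpe, hse]
  have hb : b = 0 := by
    obtain ⟨k, hk, hk1, hke⟩ := loop (fun t => StripAux.cls (Sum.inr (StripAux.circ ε t)))
      (StripAux.cls_cont.comp (continuous_inr.comp (StripAux.circ_cont ε)))
      (by simp only [StripAux.circ_one]) (fun t => (hrN (hcN t)).2)
      (fun t => by rw [hF₁r, hse]; exact Complex.exp_ne_zero _)
    refine StripAux.winding hp hs hk hp1 hs1 hk1 (a := b) (b := a) fun t => ?_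
    rw [← hke, hF₁r, hF₂r, hpe, hse, mul_comm]
  rcases hab with h | h
  · exact h ha
  · exact h hb
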